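/- With sech t = 1/cosh t, Φₐ(y) = tanh(y)·sech²(y), and Φₛ(y) = (1/8)·(15·sech²(y) − 2·cosh²(y) − 5 − 15·y·tanh(y)·sech²(y)), define I(y) = 4·∫₀^y s²·Φₛ(s) ds and Φₚ⁽²⁾(y) = 2·( y·( y·sech²(y) − 2·tanh(y) ) − log(sech²(y)) )·Φₛ(y) + Φₐ(y)·I(y). Then v(y) = Φₚ⁽²⁾(y/√2) satisfies v''(y) + 2·(3·sech²(y/√2) − 1)·v(y) = y² for all y ∈ ℝ, and Φₚ⁽²⁾(0) = 0 and (Φₚ⁽²⁾)'(0) = 0. -/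

import Mathlib

/-- The hyperbolic secant. -/
noncomputable def sech (t : ℝ) : ℝ := 1 / Real.cosh t

/-- The antisymmetric complementary function. -/
noncomputable def Phi_a (y : ℝ) : ℝ := Real.tanh y * (sech y) ^ 2

/-- The symmetric complementary function. -/
noncomputable def Phi_s (y : ℝ) : ℝ :=
  (1/8) * (15 * (sech y) ^ 2 - 2 * (Real.cosh y) ^ 2 - 5
    - 15 * y * Real.tanh y * (sech y) ^ 2)

/-- The particular integral for right-hand side `y²`, vanishing with its derivative at `0`. -/
noncomputable def Phi_p2 (y : ℝ) : ℝ :=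
  2 * (y * (y * (sech y) ^ 2 - 2 * Real.tanh y) - Real.log ((sech y) ^ 2)) * Phi_s y
    + Phi_a y * (4 * ∫ s in (0:ℝ)..y, s ^ 2 * Phi_s s)

open Real in
lemma Phi_a_eq (y : ℝ) : Phi_a y = sinh y / cosh y ^ 3 := by
  have hc := (cosh_pos y).ne'
  simp only [Phi_a, sech, tanh_eq_sinh_div_cosh]; field_simp

open Real in
lemma Phi_s_eq (y : ℝ) : Phi_s y =
    (1/8) * (15 / cosh y ^ 2 - 2 * cosh y ^ 2 - 5 - 15 * (y * (sinh y / cosh y ^ 3))) := by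
  have hc := (cosh_pos y).ne'
  simp only [Phi_s, sech, tanh_eq_sinh_div_cosh]; field_simp

noncomputable def dPa (y : ℝ) : ℝ :=
  1 / Real.cosh y ^ 2 - 3 * Real.sinh y ^ 2 / Real.cosh y ^ 4

noncomputable def dPs (y : ℝ) : ℝ :=
  (1/8) * (-45 * (Real.sinh y / Real.cosh y ^ 3) - 4 * (Real.cosh y * Real.sinh y) - 15 * (y * dPa y))

noncomputable def PA (y : ℝ) : ℝ :=
  2 * (y * (y * (sech y) ^ 2 - 2 * Real.tanh y) - Real.log ((sech y) ^ 2))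

noncomputable def PI (y : ℝ) : ℝ := 4 * ∫ s in (0:ℝ)..y, s ^ 2 * Phi_s s

open Real in
lemma hasDeriv_q (y : ℝ) : HasDerivAt (fun y => sinh y / cosh y ^ 3) (dPa y) y := by
  have hc := (cosh_pos y).ne'
  have key := (hasDerivAt_sinh y).div ((hasDerivAt_cosh y).pow 3) (pow_ne_zero 3 hc)
  refine key.congr_deriv ?_
  simp only [dPa, Pi.pow_apply]; field_simp; push_cast; ring

lemma hasDeriv_a (y : ℝ) : HasDerivAt Phi_a (dPa y) y := by
  rw [funext Phi_a_eq]; exact hasDeriv_q y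

open Real in
lemma hasDeriv_s (y : ℝ) : HasDerivAt Phi_s (dPs y) y := by
  have hc := (cosh_pos y).ne'
  rw [funext Phi_s_eq]
  have h2 := (hasDerivAt_cosh y).pow 2
  have key := (((((hasDerivAt_const y (15:ℝ)).div h2 (pow_ne_zero 2 hc)).sub
    (h2.const_mul 2)).sub_const 5).sub (((hasDerivAt_id y).mul (hasDeriv_q y)).const_mul 15)).const_mul
      (1/8)
  refine key.congr_deriv ?_
  simp only [dPs, Pi.pow_apply, id]; field_simp; push_cast; ring

open Real in
lemma hasDeriv_da (y : ℝ) : HasDerivAt dPa (-4 * (3 * sech y ^ 2 - 1) * Phi_a y) y := by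
  have hc := (cosh_pos y).ne'
  have h2 := (hasDerivAt_cosh y).pow 2
  have h4 := (hasDerivAt_cosh y).pow 4
  have hs := ((hasDerivAt_sinh y).pow 2).const_mul 3
  have e : cosh y ^ 2 = sinh y ^ 2 + 1 := cosh_sq y
  have e' : sinh y ^ 2 = cosh y ^ 2 - 1 := by linarith
  have key := ((hasDerivAt_const y (1:ℝ)).div h2 (pow_ne_zero 2 hc)).sub
    (hs.div h4 (pow_ne_zero 4 hc))
  refine key.congr_deriv ?_
  rw [Phi_a_eq]
  simp only [sech, Pi.pow_apply]; field_simp; push_cast; ring_nf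
  try simp only [show sinh y ^ 3 = sinh y * (cosh y ^ 2 - 1) by rw [← e']; ring]
  ring

open Real in
lemma hasDeriv_ds (y : ℝ) : HasDerivAt dPs (-4 * (3 * sech y ^ 2 - 1) * Phi_s y) y := by
  have hc := (cosh_pos y).ne'
  have e : cosh y ^ 2 = sinh y ^ 2 + 1 := cosh_sq y
  have e' : sinh y ^ 2 = cosh y ^ 2 - 1 := by linarith
  have key := ((((hasDeriv_q y).const_mul (-45)).sub
    (((hasDerivAt_cosh y).mul (hasDerivAt_sinh y)).const_mul 4)).sub
    (((hasDerivAt_id y).mul (hasDeriv_da y)).const_mul 15)).const_mul (1/8)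
  refine key.congr_deriv ?_
  rw [Phi_a_eq, Phi_s_eq]
  simp only [sech, dPa, id]
  rw [e']
  have e2 : sinh y * sinh y = cosh y ^ 2 - 1 := by rw [← e']; ring
  rw [e2]
  field_simp; ring

lemma cont_s : Continuous Phi_s :=
  continuous_iff_continuousAt.2 fun y => (hasDeriv_s y).continuousAt

lemma hasDeriv_I (y : ℝ) : HasDerivAt PI (4 * (y ^ 2 * Phi_s y)) y := by
  have hc : Continuous fun s : ℝ => s ^ 2 * Phi_s s := (continuous_pow 2).mul cont_s
  exact (hc.integral_hasStrictDerivAt 0 y).hasDerivAt.const_mul 4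

open Real in
lemma PA_eq (y : ℝ) : PA y = 2 * (y * (y * (1 / cosh y ^ 2) - 2 * (sinh y / cosh y))
    + 2 * log (cosh y)) := by
  simp only [PA, sech, tanh_eq_sinh_div_cosh, log_pow, one_div, log_inv, inv_pow]
  push_cast; ring

open Real in
lemma hasDeriv_A (y : ℝ) : HasDerivAt PA (-4 * (y ^ 2 * Phi_a y)) y := by
  have hc := (cosh_pos y).ne'
  have e : cosh y ^ 2 = sinh y ^ 2 + 1 := cosh_sq y
  have e' : sinh y ^ 2 = cosh y ^ 2 - 1 := by linarith
  rw [funext PA_eq, Phi_a_eq]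
  have h2 := (hasDerivAt_cosh y).pow 2
  have hi := hasDerivAt_id y
  have key := ((hi.mul ((hi.mul ((hasDerivAt_const y (1:ℝ)).div h2 (pow_ne_zero 2 hc))).sub
    (((hasDerivAt_sinh y).div (hasDerivAt_cosh y) hc).const_mul 2))).add
    (((hasDerivAt_cosh y).log hc).const_mul 2)).const_mul 2
  refine key.congr_deriv ?_
  have e2 : sinh y * sinh y = cosh y ^ 2 - 1 := by rw [← e']; ring
  simp only [Pi.pow_apply, Pi.mul_apply, Pi.sub_apply, Pi.div_apply, id, e2]
  field_simp; push_cast; ring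

open Real in
lemma wronsk (y : ℝ) : Phi_s y * dPa y - Phi_a y * dPs y = 1 := by
  have hc := (cosh_pos y).ne'
  have e : cosh y ^ 2 = sinh y ^ 2 + 1 := cosh_sq y
  have e' : sinh y ^ 2 = cosh y ^ 2 - 1 := by linarith
  rw [Phi_a_eq, Phi_s_eq]
  simp only [dPs, dPa]
  field_simp
  ring_nf
  simp only [show sinh y ^ 3 = sinh y * (cosh y ^ 2 - 1) by rw [← e']; ring, e']
  ring

lemma hasDeriv_P (y : ℝ) : HasDerivAt Phi_p2 (PA y * dPs y + PI y * dPa y) y := by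
  have : Phi_p2 = fun y => PA y * Phi_s y + Phi_a y * PI y := rfl
  rw [this]
  have key := ((hasDeriv_A y).mul (hasDeriv_s y)).add ((hasDeriv_a y).mul (hasDeriv_I y))
  refine key.congr_deriv ?_
  ring

lemma hasDeriv_dP (y : ℝ) : HasDerivAt (fun y => PA y * dPs y + PI y * dPa y)
    (4 * y ^ 2 - 4 * (3 * sech y ^ 2 - 1) * Phi_p2 y) y := by
  have key := ((hasDeriv_A y).mul (hasDeriv_ds y)).add ((hasDeriv_I y).mul (hasDeriv_da y))
  refine key.congr_deriv ?_
  have : Phi_p2 y = PA y * Phi_s y + Phi_a y * PI y := rfl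
  rw [this]
  linear_combination (4 * y ^ 2) * wronsk y

/-- `v(y) = Φₚ⁽²⁾(y/√2)` is a particular integral of the linearised equation with
right-hand side `y²`, and `Φₚ⁽²⁾(0) = (Φₚ⁽²⁾)'(0) = 0`. -/
theorem statement12 :
    (∀ y : ℝ,
      deriv (deriv (fun y : ℝ => Phi_p2 (y / Real.sqrt 2))) y
        + 2 * (3 * (sech (y / Real.sqrt 2)) ^ 2 - 1) * Phi_p2 (y / Real.sqrt 2) = y ^ 2) ∧
    Phi_p2 0 = 0 ∧ deriv Phi_p2 0 = 0 := by
  have hA : PA 0 = 0 := by simp [PA, sech]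
  have hI : PI 0 = 0 := by simp [PI]
  refine ⟨fun y => ?_, ?_, ?_⟩
  · have hd : ∀ y : ℝ, HasDerivAt (fun y : ℝ => y / Real.sqrt 2) (1 / Real.sqrt 2) y :=
      fun y => (hasDerivAt_id y).div_const _
    have h1 : deriv (fun y : ℝ => Phi_p2 (y / Real.sqrt 2)) = fun y =>
        (fun y => PA y * dPs y + PI y * dPa y) (y / Real.sqrt 2) * (1 / Real.sqrt 2) :=
      funext fun y => (HasDerivAt.comp (h₂ := Phi_p2) y (hasDeriv_P (y / Real.sqrt 2)) (hd y)).deriv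
    have h2 := (((hasDeriv_dP (y / Real.sqrt 2)).comp y (hd y)).mul_const (1 / Real.sqrt 2)).deriv
    rw [h1]
    refine (congrArg (· + _) h2).trans ?_
    have hs : (1 / Real.sqrt 2) * (1 / Real.sqrt 2) = 1 / 2 := by
      rw [div_mul_div_comm, Real.mul_self_sqrt (by norm_num)]; norm_num
    have hy : (y / Real.sqrt 2) ^ 2 = y ^ 2 / 2 := by
      rw [div_pow, Real.sq_sqrt (by norm_num)]
    rw [mul_assoc, hs, hy]; ring
  · have : Phi_p2 0 = PA 0 * Phi_s 0 + Phi_a 0 * PI 0 := rfl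
    rw [this, hA, hI]; ring
  · rw [(hasDeriv_P 0).deriv, hA, hI]; ring
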